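/- arXiv:2408.17153 — 3 statements merged into one kernel-verified Lean document; each statement's English description precedes it below -/
import Mathlib

section
/- Let N ≥ 2 and let {C₁, …, C_K} be a partition of {1, …, N} into K nonempty clusters with n_k = |C_k| and n_k^⋆ = n_k(n_k − 1)/2. Let D be a symmetric N × N real matrix with D_{ij} > 0 for all i ≠ j, and let δ₁, δ₂, μ, β, ζ, γ be positive reals. Then the iterated integral over (λ₁, …, λ_K) ∈ (0,∞)^K and (θ_{kt})_{1 ≤ k < t ≤ K} ∈ (0,∞)^{K(K−1)/2} of [∏_{k=1}^K ∏_{i<j, i,j ∈ C_k} (λ_k^{δ₁}/Γ(δ₁)) D_{ij}^{δ₁−1} e^{−λ_k D_{ij}}] · [∏_{k<t} ∏_{i ∈ C_k, j ∈ C_t} (θ_{kt}^{δ₂}/Γ(δ₂)) D_{ij}^{δ₂−1} e^{−θ_{kt} D_{ij}}] · [∏_{k=1}^K (β^μ/Γ(μ)) λ_k^{μ−1} e^{−β λ_k}] · [∏_{k<t} (γ^ζ/Γ(ζ)) θ_{kt}^{ζ−1} e^{−γ θ_{kt}}] equals ∏_{k=1}^K L_k^{(1)} · ∏_{k<t} L_{kt}^{(2)},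 where L_k^{(1)} = Γ(δ₁)^{−n_k^⋆} (Γ(μ + n_k^⋆ δ₁)/Γ(μ)) β^μ (∏_{i<j ∈ C_k} D_{ij})^{δ₁−1} (β + ∑_{i<j ∈ C_k} D_{ij})^{−μ − δ₁ n_k^⋆} and L_{kt}^{(2)} = Γ(δ₂)^{−n_k n_t} (Γ(ζ + n_k n_t δ₂)/Γ(ζ)) γ^ζ (∏_{i ∈ C_k, j ∈ C_t} D_{ij})^{δ₂−1} (γ + ∑_{i ∈ C_k, j ∈ C_t} D_{ij})^{−ζ − δ₂ n_k n_t}. -/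
open MeasureTheory Real Finset

/-!
Gamma priors are conjugate to the rate of a Gamma likelihood: likelihood times prior is a constant,
the marginal likelihood, times another Gamma density, which integrates to one. Since each rate
enters only the factors of its own cluster or pair of clusters, the integral over all rates is the
product of these one-dimensional integrals.
-/

/-- The density at `x` of the Gamma distribution with shape `a` and rate `r`. It agrees with
`ProbabilityTheory.gammaPDFReal` for `0 ≤ x`, but is not cut off to `0` for `x < 0`. -/
noncomputable def gammaDensity (a r x : ℝ) : ℝ :=
  r ^ a / Gamma a * x ^ (a - 1) * exp (-(r * x))

/-- The marginal likelihood of `n` independent Gamma observations of shape `δ` whose common rate has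
a Gamma prior of shape `m` and rate `b`. The observations enter through their sufficient statistics,
the product `P` and the sum `S`. -/
noncomputable def gammaMarginal (δ m b : ℝ) (n : ℕ) (P S : ℝ) : ℝ :=
  Gamma δ ^ (-(n : ℝ)) * (Gamma (m + n * δ) / Gamma m) * b ^ m * P ^ (δ - 1) *
    (b + S) ^ (-m - δ * n)

theorem integral_gammaDensity {a r : ℝ} (ha : 0 < a) (hr : 0 < r) :
    ∫ x in Set.Ioi 0, gammaDensity a r x = 1 := by
  simp only [gammaDensity, mul_assoc]
  rw [integral_const_mul, integral_rpow_mul_exp_neg_mul_Ioi ha hr, one_div, inv_rpow hr.le]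
  field_simp

section Conjugacy

variable {ι : Type*} {s : Finset ι} {δ m b : ℝ}

theorem prod_gammaDensity {d : ι → ℝ} (hd : ∀ e ∈ s, 0 ≤ d e) (a r : ℝ) :
    ∏ e ∈ s, gammaDensity a r (d e) =
      (r ^ a / Gamma a) ^ #s * (∏ e ∈ s, d e) ^ (a - 1) * exp (-(r * ∑ e ∈ s, d e)) := by
  simp only [gammaDensity]
  rw [prod_mul_distrib, prod_mul_distrib, prod_const, finsetProd_rpow s d hd, ← exp_sum,
    sum_neg_distrib, ← mul_sum]

theorem prod_gammaDensity_mul_gammaDensity (hδ : 0 < δ) (hm : 0 < m) (hb : 0 < b)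
    {d : ι → ℝ} (hd : ∀ e ∈ s, 0 ≤ d e) {x : ℝ} (hx : 0 < x) :
    (∏ e ∈ s, gammaDensity δ x (d e)) * gammaDensity m b x =
      gammaMarginal δ m b #s (∏ e ∈ s, d e) (∑ e ∈ s, d e) *
        gammaDensity (m + #s * δ) (b + ∑ e ∈ s, d e) x := by
  have hrate : 0 < b + ∑ e ∈ s, d e := add_pos_of_pos_of_nonneg hb (sum_nonneg hd)
  have hΓδ : 0 < Gamma δ := Gamma_pos_of_pos hδ
  have hpow : x ^ (m + #s * δ - 1) = (x ^ δ) ^ #s * x ^ (m - 1) := by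
    rw [← rpow_natCast, ← rpow_mul hx.le, ← rpow_add hx]
    ring_nf
  have hexp : exp (-((b + ∑ e ∈ s, d e) * x)) = exp (-(x * ∑ e ∈ s, d e)) * exp (-(b * x)) := by
    rw [← exp_add]
    ring_nf
  have hinv : (b + ∑ e ∈ s, d e) ^ (-m - δ * #s) = ((b + ∑ e ∈ s, d e) ^ (m + #s * δ))⁻¹ := by
    rw [← rpow_neg hrate.le]
    ring_nf
  rw [prod_gammaDensity hd, gammaMarginal, gammaDensity, gammaDensity, hpow, hexp, hinv,
    rpow_neg hΓδ.le, rpow_natCast, div_pow]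
  field_simp

theorem integral_prod_gammaDensity_mul_gammaDensity (hδ : 0 < δ) (hm : 0 < m) (hb : 0 < b)
    {d : ι → ℝ} (hd : ∀ e ∈ s, 0 ≤ d e) :
    ∫ x in Set.Ioi 0, (∏ e ∈ s, gammaDensity δ x (d e)) * gammaDensity m b x =
      gammaMarginal δ m b #s (∏ e ∈ s, d e) (∑ e ∈ s, d e) := by
  have hrate : 0 < b + ∑ e ∈ s, d e := add_pos_of_pos_of_nonneg hb (sum_nonneg hd)
  rw [setIntegral_congr_fun measurableSet_Ioi fun x hx =>
      prod_gammaDensity_mul_gammaDensity hδ hm hb hd hx,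
    integral_const_mul, integral_gammaDensity (by positivity) hrate, mul_one]

theorem integral_prod_prod_gammaDensity_mul_gammaDensity (hδ : 0 < δ) (hm : 0 < m) (hb : 0 < b)
    {κ : Type*} {t : ι → Finset κ} {d : ι → κ → ℝ} (hd : ∀ i ∈ s, ∀ j ∈ t i, 0 ≤ d i j) :
    ∫ x in Set.Ioi 0, (∏ i ∈ s, ∏ j ∈ t i, gammaDensity δ x (d i j)) * gammaDensity m b x =
      gammaMarginal δ m b (∑ i ∈ s, #(t i)) (∏ i ∈ s, ∏ j ∈ t i, d i j)
        (∑ i ∈ s, ∑ j ∈ t i, d i j) := by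
  have hd' : ∀ e ∈ s.sigma t, 0 ≤ d e.1 e.2 := fun e he =>
    hd e.1 (mem_sigma.1 he).1 e.2 (mem_sigma.1 he).2
  simpa only [prod_sigma, sum_sigma, card_sigma] using
    integral_prod_gammaDensity_mul_gammaDensity hδ hm hb hd'

end Conjugacy

theorem sum_card_filter_lt {α : Type*} [LinearOrder α] (s : Finset α) :
    ∑ i ∈ s, #{j ∈ s | i < j} = #s * (#s - 1) / 2 := by
  rw [← Nat.choose_two_right]
  induction s using Finset.induction_on_max with
  | empty => rfl
  | insert a s ha ih =>
    have hmem : a ∉ s := fun h => (ha a h).false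
    have hmax : #{j ∈ insert a s | a < j} = 0 := by
      rw [card_eq_zero, filter_eq_empty_iff]
      exact fun j hj => ((mem_insert.1 hj).elim le_of_eq fun h => (ha j h).le).not_gt
    have hbelow : ∀ i ∈ s, #{j ∈ insert a s | i < j} = #{j ∈ s | i < j} + 1 := fun i hi => by
      rw [filter_insert, if_pos (ha i hi),
        card_insert_of_notMem fun h => hmem (mem_filter.1 h).1]
    rw [sum_insert hmem, hmax, sum_congr rfl hbelow, sum_add_distrib, ih,
      card_insert_of_notMem hmem, Nat.choose_succ_succ', Nat.choose_one_right, sum_const,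
      smul_eq_mul, mul_one, zero_add, add_comm]

section ProductIntegrals

variable {ι 𝕜 : Type*} [Fintype ι] [RCLike 𝕜] {E : ι → Type*} [∀ i, MeasureSpace (E i)]
  [∀ i, SigmaFinite (volume : Measure (E i))]

theorem setIntegral_univ_pi_prod_eq_prod (s : ∀ i, Set (E i)) (f : ∀ i, E i → 𝕜) :
    ∫ x in Set.univ.pi s, ∏ i, f i (x i) = ∏ i, ∫ x in s i, f i x := by
  rw [volume_pi, Measure.restrict_pi_pi, integral_fintype_prod_eq_prod]

theorem setIntegral_univ_pi_setIntegral_univ_pi_prod_mul {κ : Type*} [Fintype κ] {F : κ → Type*}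
    [∀ j, MeasureSpace (F j)] [∀ j, SigmaFinite (volume : Measure (F j))]
    (s : ∀ i, Set (E i)) (t : ∀ j, Set (F j)) (f p : ∀ i, E i → 𝕜) (g q : ∀ j, F j → 𝕜) :
    ∫ x in Set.univ.pi s, ∫ y in Set.univ.pi t,
        (∏ i, f i (x i)) * (∏ j, g j (y j)) * (∏ i, p i (x i)) * (∏ j, q j (y j)) =
      (∏ i, ∫ x in s i, f i x * p i x) * ∏ j, ∫ y in t j, g j y * q j y := by
  simp only [mul_right_comm _ (∏ j, g j _) (∏ i, p i _), mul_assoc _ (∏ j, g j _) (∏ j, q j _),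
    ← prod_mul_distrib, integral_const_mul, integral_mul_const]
  rw [setIntegral_univ_pi_prod_eq_prod s fun i x => f i x * p i x,
    setIntegral_univ_pi_prod_eq_prod t fun j y => g j y * q j y]

end ProductIntegrals

theorem bdc_marginal_likelihood_general {α κ : Type*} [LinearOrder α] [LinearOrder κ] [Fintype κ]
    {C : κ → Finset α} (hdisj : ∀ k t, k ≠ t → Disjoint (C k) (C t))
    {D : α → α → ℝ} (hpos : ∀ i j, i ≠ j → 0 < D i j) {δ₁ δ₂ μ β ζ γ₀ : ℝ}
    (hδ₁ : 0 < δ₁) (hδ₂ : 0 < δ₂) (hμ : 0 < μ) (hβ : 0 < β) (hζ : 0 < ζ) (hγ₀ : 0 < γ₀) :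
    ∫ lam in Set.univ.pi fun _ : κ => Set.Ioi (0 : ℝ),
      ∫ th in Set.univ.pi fun _ : {p : κ × κ // p.1 < p.2} => Set.Ioi (0 : ℝ),
        (∏ k, ∏ i ∈ C k, ∏ j ∈ C k with i < j, gammaDensity δ₁ (lam k) (D i j)) *
        (∏ p, ∏ i ∈ C p.1.1, ∏ j ∈ C p.1.2, gammaDensity δ₂ (th p) (D i j)) *
        (∏ k, gammaDensity μ β (lam k)) *
        (∏ p, gammaDensity ζ γ₀ (th p)) =
    (∏ k, gammaMarginal δ₁ μ β (#(C k) * (#(C k) - 1) / 2)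
      (∏ i ∈ C k, ∏ j ∈ C k with i < j, D i j) (∑ i ∈ C k, ∑ j ∈ C k with i < j, D i j)) *
    ∏ p : {p : κ × κ // p.1 < p.2}, gammaMarginal δ₂ ζ γ₀ (#(C p.1.1) * #(C p.1.2))
      (∏ i ∈ C p.1.1, ∏ j ∈ C p.1.2, D i j) (∑ i ∈ C p.1.1, ∑ j ∈ C p.1.2, D i j) := by
  have hwithin (k : κ) : ∀ i ∈ C k, ∀ j ∈ {j ∈ C k | i < j}, 0 ≤ D i j := fun i _ j hj =>
    (hpos i j (mem_filter.1 hj).2.ne).le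
  have hbetween (p : {p : κ × κ // p.1 < p.2}) : ∀ i ∈ C p.1.1, ∀ j ∈ C p.1.2, 0 ≤ D i j :=
    fun i hi j hj => (hpos i j (disjoint_iff_ne.1 (hdisj _ _ p.2.ne) i hi j hj)).le
  rw [setIntegral_univ_pi_setIntegral_univ_pi_prod_mul _ _
    (fun k x => ∏ i ∈ C k, ∏ j ∈ C k with i < j, gammaDensity δ₁ x (D i j))
    (fun _ => gammaDensity μ β)
    (fun (p : {p : κ × κ // p.1 < p.2}) x =>
      ∏ i ∈ C p.1.1, ∏ j ∈ C p.1.2, gammaDensity δ₂ x (D i j))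
    (fun _ => gammaDensity ζ γ₀)]
  congr 1
  · refine prod_congr rfl fun k _ => ?_
    rw [integral_prod_prod_gammaDensity_mul_gammaDensity hδ₁ hμ hβ (hwithin k),
      sum_card_filter_lt]
  · refine prod_congr rfl fun p _ => ?_
    rw [integral_prod_prod_gammaDensity_mul_gammaDensity hδ₂ hζ hγ₀ (hbetween p), sum_const,
      smul_eq_mul]

/-- Closed form of the marginal (rates integrated out) cohesion–repulsion
Bayesian distance clustering likelihood, for a partition `C₁, …, C_K` of `{1,…,N}`. -/
theorem bdc_marginal_likelihood (N K : ℕ) (hN : 2 ≤ N) (hK : 0 < K)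
    (C : Fin K → Finset (Fin N))
    (hne : ∀ k, (C k).Nonempty)
    (hdisj : ∀ k t : Fin K, k ≠ t → Disjoint (C k) (C t))
    (hcover : Finset.univ.biUnion C = (Finset.univ : Finset (Fin N)))
    (D : Fin N → Fin N → ℝ)
    (hsymm : ∀ i j, D i j = D j i)
    (hpos : ∀ i j, i ≠ j → 0 < D i j)
    (δ₁ δ₂ μ β ζ γ₀ : ℝ)
    (hδ₁ : 0 < δ₁) (hδ₂ : 0 < δ₂) (hμ : 0 < μ) (hβ : 0 < β) (hζ : 0 < ζ) (hγ₀ : 0 < γ₀) :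
    (∫ lam in Set.univ.pi (fun _ : Fin K => Set.Ioi (0 : ℝ)),
      ∫ th in Set.univ.pi (fun _ : {p : Fin K × Fin K // p.1 < p.2} => Set.Ioi (0 : ℝ)),
        (∏ k : Fin K, ∏ i ∈ C k, ∏ j ∈ (C k).filter (fun j => i < j),
            (lam k ^ δ₁ / Real.Gamma δ₁) * D i j ^ (δ₁ - 1) * Real.exp (-(lam k * D i j))) *
        (∏ p : {p : Fin K × Fin K // p.1 < p.2}, ∏ i ∈ C p.1.1, ∏ j ∈ C p.1.2,
            (th p ^ δ₂ / Real.Gamma δ₂) * D i j ^ (δ₂ - 1) * Real.exp (-(th p * D i j))) *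
        (∏ k : Fin K, (β ^ μ / Real.Gamma μ) * lam k ^ (μ - 1) * Real.exp (-(β * lam k))) *
        (∏ p : {p : Fin K × Fin K // p.1 < p.2},
            (γ₀ ^ ζ / Real.Gamma ζ) * th p ^ (ζ - 1) * Real.exp (-(γ₀ * th p))))
    =
    (∏ k : Fin K,
        Real.Gamma δ₁ ^ (-((((C k).card * ((C k).card - 1) / 2 : ℕ) : ℝ))) *
          (Real.Gamma (μ + (((C k).card * ((C k).card - 1) / 2 : ℕ) : ℝ) * δ₁) /
            Real.Gamma μ) *
          β ^ μ *
          (∏ i ∈ C k, ∏ j ∈ (C k).filter (fun j => i < j), D i j) ^ (δ₁ - 1) *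
          (β + ∑ i ∈ C k, ∑ j ∈ (C k).filter (fun j => i < j), D i j) ^
            (-μ - δ₁ * (((C k).card * ((C k).card - 1) / 2 : ℕ) : ℝ))) *
    (∏ p : {p : Fin K × Fin K // p.1 < p.2},
        Real.Gamma δ₂ ^ (-((((C p.1.1).card * (C p.1.2).card : ℕ) : ℝ))) *
          (Real.Gamma (ζ + (((C p.1.1).card * (C p.1.2).card : ℕ) : ℝ) * δ₂) /
            Real.Gamma ζ) *
          γ₀ ^ ζ *
          (∏ i ∈ C p.1.1, ∏ j ∈ C p.1.2, D i j) ^ (δ₂ - 1) *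
          (γ₀ + ∑ i ∈ C p.1.1, ∑ j ∈ C p.1.2, D i j) ^
            (-ζ - δ₂ * (((C p.1.1).card * (C p.1.2).card : ℕ) : ℝ))) := by
  exact bdc_marginal_likelihood_general hdisj hpos hδ₁ hδ₂ hμ hβ hζ hγ₀
end

section
/- Let N ≥ 1, let D be a symmetric N × N real matrix with D_{ii} = 0 and D_{ij} > 0 for i ≠ j, let γ ⊆ {1, …, N} be a nonempty medoid set such that for every j the minimizer of D_{lj} over l ∈ γ is unique, and let σ be a permutation of {1, …, N}. Define D⋆ by D⋆_{ij} = D_{σ(i) σ(j)} and γ⋆ = σ^{−1}(γ). Then for any functions f : ℝ × ℝ → ℝ and g : ℝ → ℝ and any family of real parameters (λ_i)_{i ∈ γ}, the medoid-based linear likelihood is invariant: ∏_{i ∈ γ⋆} ∏_{j ∈ C_i(D⋆, γ⋆) \ {i}} f(D⋆_{ij}, λ_{σ(i)}) · ∏_{i, j ∈ γ⋆, i ≠ j} g(D⋆_{ij}) = ∏_{i ∈ γ} ∏_{j ∈ C_i(D, γ) \ {i}} f(D_{ij}, λ_i) · ∏_{i, j ∈ γ, i ≠ j} g(D_{ij}).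 -/
open Finset

/-- The Voronoi cluster (as a `Finset`) of medoid `i` in the medoid set `γ` for distance
matrix `D`: all objects `j` whose minimizer of `D l j` over `l ∈ γ` is `i`. -/
noncomputable def voronoiClusterF {N : ℕ} (D : Fin N → Fin N → ℝ) (γ : Finset (Fin N)) (i : Fin N) :
    Finset (Fin N) :=
  Finset.univ.filter (fun j => i ∈ γ ∧ ∀ l ∈ γ, D i j ≤ D l j)

section Relabeling

variable {ι κ α Λ M : Type*}

open scoped Classical in
/-- The Voronoi cluster of the medoid `i` for dissimilarities `D` with values in any ordered type:
`voronoiClusterF` is the case of objects `Fin N` and real dissimilarities. An object with several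
nearest medoids belongs to the cluster of each of them. -/
noncomputable def voronoiCluster [Fintype κ] [LE α] (D : κ → κ → α) (γ : Finset κ) (i : κ) :
    Finset κ :=
  univ.filter fun j => i ∈ γ ∧ ∀ l ∈ γ, D i j ≤ D l j

theorem voronoiClusterF_eq_voronoiCluster {N : ℕ} (D : Fin N → Fin N → ℝ) (γ : Finset (Fin N))
    (i : Fin N) : voronoiClusterF D γ i = voronoiCluster D γ i := by
  ext j
  simp only [voronoiClusterF, voronoiCluster, mem_filter]

variable [DecidableEq ι]

theorem voronoiCluster_image_symm [Fintype ι] [Fintype κ] [LE α] (σ : ι ≃ κ) (D : κ → κ → α)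
    (γ : Finset κ) (i : ι) :
    voronoiCluster (fun a b => D (σ a) (σ b)) (γ.image σ.symm) i =
      (voronoiCluster D γ (σ i)).image σ.symm := by
  ext j
  have nearest_iff : (∀ l : ι, σ l ∈ γ → D (σ i) (σ j) ≤ D (σ l) (σ j)) ↔
      ∀ l ∈ γ, D (σ i) (σ j) ≤ D l (σ j) :=
    σ.forall_congr_left.trans (by simp only [σ.apply_symm_apply])
  simp [voronoiCluster, σ.symm_apply_eq, nearest_iff]

variable [DecidableEq κ]

theorem prod_prod_erase_image_symm [CommMonoid M] (σ : ι ≃ κ) (s : Finset κ) (t : κ → Finset κ)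
    (F : κ → κ → M) :
    ∏ i ∈ s.image σ.symm, ∏ j ∈ ((t (σ i)).image σ.symm).erase i, F (σ i) (σ j) =
      ∏ i ∈ s, ∏ j ∈ (t i).erase i, F i j := by
  rw [prod_image σ.symm.injective.injOn]
  refine prod_congr rfl fun i _ => ?_
  rw [σ.apply_symm_apply, ← image_erase σ.symm.injective, prod_image σ.symm.injective.injOn]
  simp only [σ.apply_symm_apply]

/-- The linear likelihood of the medoid set `γ`: the cohesion `f` of the objects to the medoids of
their clusters, with parameter `lam i` in the cluster of `i`, times the repulsion `g` over ordered
pairs of distinct medoids. -/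
noncomputable def linearLikelihood [Fintype κ] [LE α] [CommMonoid M] (D : κ → κ → α)
    (γ : Finset κ) (f : α × Λ → M) (g : α → M) (lam : κ → Λ) : M :=
  (∏ i ∈ γ, ∏ j ∈ (voronoiCluster D γ i).erase i, f (D i j, lam i)) *
    ∏ i ∈ γ, ∏ j ∈ γ.erase i, g (D i j)

theorem bdc_linear_likelihood_exchangeable_general [Fintype ι] [Fintype κ] [LE α] [CommMonoid M]
    (σ : ι ≃ κ) (D : κ → κ → α) (γ : Finset κ) (f : α × Λ → M) (g : α → M) (lam : κ → Λ) :
    linearLikelihood (fun a b => D (σ a) (σ b)) (γ.image σ.symm) f g (fun a => lam (σ a)) =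
      linearLikelihood D γ f g lam := by
  simp only [linearLikelihood, voronoiCluster_image_symm]
  congr 1
  · exact prod_prod_erase_image_symm σ γ (voronoiCluster D γ) fun i j => f (D i j, lam i)
  · exact prod_prod_erase_image_symm σ γ (fun _ => γ) fun i j => g (D i j)

end Relabeling

/-- Exchangeability of the medoid-based "linear" likelihood: permuting the objects by `σ`
(so `D⋆ i j = D (σ i) (σ j)`, `γ⋆ = σ⁻¹(γ)`) leaves the cohesion–repulsion product
unchanged. -/
theorem bdc_linear_likelihood_exchangeable (N : ℕ) (hN : 1 ≤ N)
    (D : Fin N → Fin N → ℝ)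
    (hsymm : ∀ i j, D i j = D j i)
    (hdiag : ∀ i, D i i = 0) (hpos : ∀ i j, i ≠ j → 0 < D i j)
    (γ : Finset (Fin N)) (hγ : γ.Nonempty)
    (huniq : ∀ j, ∃! i, i ∈ γ ∧ ∀ l ∈ γ, D i j ≤ D l j)
    (σ : Equiv.Perm (Fin N))
    (f : ℝ × ℝ → ℝ) (g : ℝ → ℝ) (lam : Fin N → ℝ) :
    (∏ i ∈ γ.image σ.symm,
        ∏ j ∈ (voronoiClusterF (fun a b => D (σ a) (σ b)) (γ.image σ.symm) i).erase i,
          f (D (σ i) (σ j), lam (σ i))) *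
    (∏ i ∈ γ.image σ.symm, ∏ j ∈ (γ.image σ.symm).erase i, g (D (σ i) (σ j)))
    =
    (∏ i ∈ γ, ∏ j ∈ (voronoiClusterF D γ i).erase i, f (D i j, lam i)) *
    (∏ i ∈ γ, ∏ j ∈ γ.erase i, g (D i j)) := by
  simpa only [linearLikelihood, voronoiClusterF_eq_voronoiCluster] using
    bdc_linear_likelihood_exchangeable_general σ D γ f g lam
end

section
/- Let N ≥ 3, let 1 ≤ K ≤ N, let a > 0, and let D be an N × N real matrix with D_{ii} = 0 for all i, D_{1j} = D_{j1} = a for all j ≠ 1, and D_{ij} > a for all distinct i, j both different from 1. Let γ ⊆ {1, …, N} be any medoid set with 1 ∈ γ and |γ| = K. Then the Voronoi tessellation satisfies C_1(D, γ) = {1} ∪ ({1, …, N} \ γ) and C_l(D, γ) = {l} for every l ∈ γ with l ≠ 1; consequently the size of the largest cluster equals N − K + 1. -/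
open Finset

section Tessellation

variable {N : ℕ} {D : Fin N → Fin N → ℝ} {γ : Finset (Fin N)}

lemma mem_voronoiClusterF {i j : Fin N} :
    j ∈ voronoiClusterF D γ i ↔ i ∈ γ ∧ ∀ l ∈ γ, D i j ≤ D l j := by
  simp [voronoiClusterF]

/-- `voronoiClusterF` puts a tied object into several clusters; strictness rules this out. -/
lemma mem_voronoiClusterF_iff_eq_of_forall_lt {i j m : Fin N} (hm : m ∈ γ)
    (hlt : ∀ l ∈ γ, l ≠ m → D m j < D l j) : j ∈ voronoiClusterF D γ i ↔ i = m := by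
  rw [mem_voronoiClusterF]
  constructor
  · rintro ⟨hi, hle⟩
    by_contra hne
    exact (hlt i hi hne).not_ge (hle m hm)
  · rintro rfl
    refine ⟨hm, fun l hl => ?_⟩
    obtain rfl | hne := eq_or_ne l i
    · exact le_rfl
    · exact (hlt l hl hne).le

/-- The object `c` is a hub of the dissimilarity `D`: every object is strictly closest to itself,
and every object other than `c` is strictly closer to `c` than to any third object. The distance
from medoid `i` to object `j` is `D i j`, so both conditions compare entries within a column. -/
structure IsVoronoiHub (D : Fin N → Fin N → ℝ) (c : Fin N) : Prop where
  self_lt : ∀ i j, i ≠ j → D j j < D i j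
  hub_lt : ∀ i j, i ≠ j → i ≠ c → j ≠ c → D c j < D i j

namespace IsVoronoiHub

variable {c : Fin N}

lemma of_equidistant {a : ℝ} (ha : 0 < a) (hdiag : ∀ i, D i i = 0)
    (hhub : ∀ j, j ≠ c → D c j = a ∧ D j c = a)
    (hrest : ∀ i j, i ≠ j → i ≠ c → j ≠ c → a < D i j) : IsVoronoiHub D c where
  self_lt i j hij := by
    rw [hdiag]
    obtain rfl | hi := eq_or_ne i c
    · rwa [(hhub j hij.symm).1]
    obtain rfl | hj := eq_or_ne j c
    · rwa [(hhub i hi).2]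
    · exact ha.trans (hrest i j hij hi hj)
  hub_lt i j hij hi hj := by
    rw [(hhub j hj).1]
    exact hrest i j hij hi hj

lemma mem_voronoiClusterF_iff_of_mem (h : IsVoronoiHub D c) {i j : Fin N} (hj : j ∈ γ) :
    j ∈ voronoiClusterF D γ i ↔ i = j :=
  mem_voronoiClusterF_iff_eq_of_forall_lt hj fun l _ hlj => h.self_lt l j hlj

lemma mem_voronoiClusterF_iff_of_notMem (h : IsVoronoiHub D c) (hc : c ∈ γ) {i j : Fin N}
    (hj : j ∉ γ) : j ∈ voronoiClusterF D γ i ↔ i = c :=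
  mem_voronoiClusterF_iff_eq_of_forall_lt hc fun l hl hlc =>
    h.hub_lt l j (ne_of_mem_of_not_mem hl hj) hlc (ne_of_mem_of_not_mem hc hj).symm

lemma voronoiClusterF_hub (h : IsVoronoiHub D c) (hc : c ∈ γ) :
    voronoiClusterF D γ c = insert c (univ \ γ) := by
  ext j
  by_cases hj : j ∈ γ
  · simp [h.mem_voronoiClusterF_iff_of_mem hj, hj, eq_comm]
  · simp [h.mem_voronoiClusterF_iff_of_notMem hc hj, hj]

lemma voronoiClusterF_eq_singleton (h : IsVoronoiHub D c) (hc : c ∈ γ) {l : Fin N} (hl : l ∈ γ)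
    (hlc : l ≠ c) : voronoiClusterF D γ l = {l} := by
  ext j
  by_cases hj : j ∈ γ
  · simp [h.mem_voronoiClusterF_iff_of_mem hj, eq_comm]
  · simp [h.mem_voronoiClusterF_iff_of_notMem hc hj, hlc, (ne_of_mem_of_not_mem hl hj).symm]

lemma card_voronoiClusterF_hub (h : IsVoronoiHub D c) (hc : c ∈ γ) :
    #(voronoiClusterF D γ c) = N - #γ + 1 := by
  rw [h.voronoiClusterF_hub hc, card_insert_of_notMem (by simp [hc]), card_univ_sdiff,
    Fintype.card_fin]

lemma sup_card_voronoiClusterF (h : IsVoronoiHub D c) (hc : c ∈ γ) :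
    γ.sup (fun i => #(voronoiClusterF D γ i)) = N - #γ + 1 := by
  rw [← h.card_voronoiClusterF_hub hc]
  refine le_antisymm (Finset.sup_le fun i hi => ?_)
    (le_sup (f := fun i => #(voronoiClusterF D γ i)) hc)
  obtain rfl | hic := eq_or_ne i c
  · exact le_rfl
  · rw [h.voronoiClusterF_eq_singleton hc hi hic, h.card_voronoiClusterF_hub hc, card_singleton]
    exact Nat.le_add_left 1 _

end IsVoronoiHub

end Tessellation

theorem voronoi_no_microclustering_general {N : ℕ} {D : Fin N → Fin N → ℝ} {c : Fin N}
    (h : IsVoronoiHub D c) {γ : Finset (Fin N)} (hc : c ∈ γ) :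
    voronoiClusterF D γ c = insert c (univ \ γ) ∧
    (∀ l ∈ γ, l ≠ c → voronoiClusterF D γ l = {l}) ∧
    γ.sup (fun i => #(voronoiClusterF D γ i)) = N - #γ + 1 :=
  ⟨h.voronoiClusterF_hub hc, fun _ => h.voronoiClusterF_eq_singleton hc,
    h.sup_card_voronoiClusterF hc⟩

/-- The counterexample in the proof of Proposition 1 (failure of microclustering): if object
`1` is at distance `a` from everyone and all other pairwise distances exceed `a`, then for any
medoid set `γ ∋ 1` of size `K` the cluster of `1` is `{1} ∪ ([N] \ γ)`, all other medoids are
singleton clusters, and the largest cluster has size `N − K + 1`. -/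
theorem voronoi_no_microclustering (N K : ℕ) (hN : 3 ≤ N) (hK1 : 1 ≤ K) (hKN : K ≤ N)
    (a : ℝ) (ha : 0 < a)
    (D : Fin N → Fin N → ℝ)
    (hdiag : ∀ i, D i i = 0)
    (hfirst : ∀ j : Fin N, j ≠ ⟨0, by omega⟩ →
      D ⟨0, by omega⟩ j = a ∧ D j ⟨0, by omega⟩ = a)
    (hrest : ∀ i j : Fin N, i ≠ j → i ≠ ⟨0, by omega⟩ → j ≠ ⟨0, by omega⟩ → a < D i j)
    (γ : Finset (Fin N)) (h0γ : (⟨0, by omega⟩ : Fin N) ∈ γ) (hcard : γ.card = K) :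
    voronoiClusterF D γ ⟨0, by omega⟩
        = insert (⟨0, by omega⟩ : Fin N) (Finset.univ \ γ) ∧
    (∀ l ∈ γ, l ≠ (⟨0, by omega⟩ : Fin N) → voronoiClusterF D γ l = {l}) ∧
    γ.sup (fun i => (voronoiClusterF D γ i).card) = N - K + 1 := by
  subst hcard
  exact voronoi_no_microclustering_general (.of_equidistant ha hdiag hfirst hrest) h0γ
end
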